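/- Let Y ~ N(0,1) and w > 0 with w ≤ ε²/(2 log(2/δ)) for some ε ∈ (0,1] and δ ∈ (0,1/2]. Then ε/√w - √w/2 > 0 and P(√w·Y + w/2 > ε) ≤ δ. -/

import Mathlib

open MeasureTheory ProbabilityTheory

/-- One-sided Chernoff bound for the standard Gaussian distribution. -/
lemma gaussianReal_measureReal_Ici_le_exp {t : ℝ} (ht : 0 ≤ t) :
    (gaussianReal 0 1).real (Set.Ici t) ≤ Real.exp (-t ^ 2 / 2) := by
  have h := measure_ge_le_exp_mul_mgf (μ := gaussianReal 0 1) (X := id) t ht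
    (integrable_exp_mul_gaussianReal t)
  rw [mgf_gaussianReal (μ := 0) (v := 1) (by simp), ← Real.exp_add] at h
  refine h.trans (Real.exp_le_exp.2 (le_of_eq ?_))
  push_cast
  ring

/-- Core DP calculation: if `Y ~ N(0,1)`, `0 < w ≤ ε²/(2 log(2/δ))` with `ε ∈ (0,1]`,
`δ ∈ (0,1/2]`, then `ε/√w - √w/2 > 0` and `P(√w·Y + w/2 > ε) ≤ δ`. -/
theorem gaussian_likelihood_ratio_tail (w ε δ : ℝ)
    (hw : 0 < w) (hε : 0 < ε ∧ ε ≤ 1) (hδ : 0 < δ ∧ δ ≤ 1/2)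
    (hwb : w ≤ ε^2 / (2 * Real.log (2/δ))) :
    0 < ε / Real.sqrt w - Real.sqrt w / 2 ∧
    (gaussianReal 0 1) {y : ℝ | ε < Real.sqrt w * y + w / 2} ≤ ENNReal.ofReal δ := by
  obtain ⟨hε0, hε1⟩ := hε
  obtain ⟨hδ0, hδ2⟩ := hδ
  have hlog2 := Real.log_two_gt_d9
  have hlog : Real.log (2 / δ) = Real.log 2 - Real.log δ :=
    Real.log_div two_ne_zero hδ0.ne'
  have hlogδ : Real.log δ ≤ -Real.log 2 := by
    rw [← Real.log_inv]
    exact Real.log_le_log hδ0 (by linarith)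
  have hL : 1 ≤ Real.log (2 / δ) := by linarith
  rw [le_div_iff₀ (by linarith)] at hwb
  have hwε : w < 2 * ε := by nlinarith
  have hs : 0 < Real.sqrt w := Real.sqrt_pos.2 hw
  have hss : Real.sqrt w ^ 2 = w := Real.sq_sqrt hw.le
  set s := Real.sqrt w
  have ht : 0 < ε / s - s / 2 := by
    rw [sub_pos, lt_div_iff₀ hs]
    nlinarith
  refine ⟨ht, ?_⟩
  have hsub : {y : ℝ | ε < s * y + w / 2} ⊆ Set.Ici (ε / s - s / 2) := by
    intro y hy
    have hy' : ε < s * y + w / 2 := hy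
    rw [Set.mem_Ici, sub_le_iff_le_add, div_le_iff₀ hs]
    nlinarith
  have hsq : (ε / s - s / 2) ^ 2 = ε ^ 2 / w - ε + w / 4 := by
    rw [← hss]
    field_simp
    ring
  have hεw : 2 * Real.log (2 / δ) ≤ ε ^ 2 / w := by
    rw [le_div_iff₀ hw]
    linarith
  refine (measure_mono hsub).trans ?_
  rw [← ofReal_measureReal]
  refine ENNReal.ofReal_le_ofReal ((gaussianReal_measureReal_Ici_le_exp ht.le).trans ?_)
  rw [← Real.le_log_iff_exp_le hδ0, neg_div, hsq]
  linarith
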